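/- arXiv:1809.08206 — 3 statements merged into one kernel-verified Lean document; each statement's English description precedes it below -/
import Mathlib

section
/- Let {(x_i, y_i, d_i) : i = 1,...,N} be Hermite data with x_1 < x_2 < ... < x_N (N > 2). Suppose |α_i| ≤ κ a_i with 0 ≤ κ < 1, u_i > 0 and v_i ≥ 0 for all i = 1,...,N−1. Then the unique continuous function Ψ : I → ℝ satisfying Ψ(L_i(x)) = α_i Ψ(x) + q_i(x), with q_i the rational cubic with coefficients U_i = u_i(y_i − α_i y_1), V_i = (3u_i + v_i)(y_i − α_i y_1) + u_i h_i d_i − α_i u_i (x_N − x_1) d_1, W_i = (3u_i + v_i)(y_{i+1} − α_i y_N) − u_i h_i d_{i+1} + α_i u_i (x_N − x_1) d_N, Z_i = u_i(y_{i+1} − α_i y_N), is continuously differentiable on I and satisfies Ψ(x_i) = y_i and Ψ'(x_i) = d_i for every i = 1,...,N; moreover Ψ' satisfies Ψ'(L_i(x)) = (α_i Ψ'(x) + q_i'(x))/a_i for all x ∈ I. -/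
lemma piece_exists (N : ℕ) (x : ℕ → ℝ) (k : ℕ) (hk : 1 ≤ k) (hkN : k < N) (s : ℝ) (h1 : x 1 ≤ s) (h2 : s ≤ x (k+1)) :
    ∃ i, 1 ≤ i ∧ i < N ∧ x i ≤ s ∧ s ≤ x (i + 1) := by
  induction k, hk using Nat.le_induction with
  | base => exact ⟨1, le_rfl, hkN, h1, h2⟩
  | succ k hk ih =>
    by_cases h : s ≤ x (k+1)
    · exact ih (by omega) h
    · exact ⟨k+1, by omega, hkN, (not_le.1 h).le, h2⟩

lemma x_mono (N : ℕ) (x : ℕ → ℝ) (hx : ∀ i, 1 ≤ i → i < N → x i < x (i + 1))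
    (i j : ℕ) (hi : 1 ≤ i) (hij : i ≤ j) (hj : j ≤ N) : x i ≤ x j := by
  induction j, hij using Nat.le_induction with
  | base => exact le_rfl
  | succ k hk ih => exact (ih (by omega)).trans (hx k (by omega) (by omega)).le

lemma exists_fix (N : ℕ) (hN : 2 < N) (x d : ℕ → ℝ)
    (hx : ∀ i, 1 ≤ i → i < N → x i < x (i + 1))
    (a c : ℕ → ℝ) (ha : ∀ i, a i = (x (i + 1) - x i) / (x N - x 1))
    (κ : ℝ) (hκ0 : 0 ≤ κ) (hκ1 : κ < 1)
    (hc : ∀ i, 1 ≤ i → i < N → |c i| ≤ κ)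
    (p : ℕ → ℝ → ℝ) (hp : ∀ i, 1 ≤ i → i < N → ContinuousOn (p i) (Set.Icc (x 1) (x N)))
    (hp1 : ∀ i, 1 ≤ i → i < N → c i * d 1 + p i (x 1) = d i)
    (hpN : ∀ i, 1 ≤ i → i < N → c i * d N + p i (x N) = d (i + 1)) :
    ∃ f : ℝ → ℝ, Continuous f ∧ f (x 1) = d 1 ∧ f (x N) = d N ∧
      ∀ i, 1 ≤ i → i < N → ∀ t ∈ Set.Icc (x 1) (x N),
        f (x i + a i * (t - x 1)) = c i * f t + p i t := by
  have hlt : x 1 < x N := lt_of_lt_of_le (hx 1 le_rfl (by omega)) (x_mono N x hx 2 N (by omega) (by omega) le_rfl)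
  have hle := hlt.le
  have hl : 0 < x N - x 1 := sub_pos.2 hlt
  have hapos : ∀ i, 1 ≤ i → i < N → 0 < a i := fun i h1 h2 => by
    rw [ha]; exact div_pos (sub_pos.2 (hx i h1 h2)) hl
  let I := Set.Icc (x 1) (x N)
  let l1 : I := ⟨x 1, le_rfl, hle⟩
  let lN : I := ⟨x N, hle, le_rfl⟩
  let π : ℕ → ℝ → I := fun i s => Set.projIcc (x 1) (x N) hle (x 1 + (s - x i) / a i)
  have hπc : ∀ i, Continuous (π i) := fun i => by
    apply continuous_projIcc.comp; fun_prop
  let g : C(I, ℝ) → ℕ → I → ℝ := fun f i t => c i * f t + p i t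
  have hgc : ∀ f i, 1 ≤ i → i < N → Continuous (g f i) := fun f i h1 h2 => by
    have : Continuous (fun t : I => p i t) := (hp i h1 h2).domRestrict
    exact (continuous_const.mul f.continuous).add this
  let T : C(I, ℝ) → C(I, ℝ) := fun f =>
    ⟨fun s => d 1 + ∑ i ∈ Finset.Ico 1 N, (g f i (π i s) - d i), by
      refine continuous_const.add (continuous_finsetSum _ fun i hi => ?_)
      rw [Finset.mem_Ico] at hi
      exact ((hgc f i hi.1 hi.2).comp ((hπc i).comp continuous_subtype_val)).sub continuous_const⟩
  let S : Set C(I, ℝ) := {f | f l1 = d 1 ∧ f lN = d N}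
  have key : ∀ f ∈ S, ∀ k, 1 ≤ k → k < N → ∀ s : I, x k ≤ s → (s : ℝ) ≤ x (k+1) →
      T f s = g f k (π k s) := by
    intro f hf k hk1 hkN s hs1 hs2
    have hg1 : ∀ i, 1 ≤ i → i < N → g f i l1 = d i := fun i h1 h2 => by
      show c i * f l1 + p i (x 1) = _
      rw [hf.1, hp1 i h1 h2]
    have hgN : ∀ i, 1 ≤ i → i < N → g f i lN = d (i+1) := fun i h1 h2 => by
      show c i * f lN + p i (x N) = _
      rw [hf.2, hpN i h1 h2]
    show d 1 + ∑ i ∈ Finset.Ico 1 N, (g f i (π i s) - d i) = _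
    rw [← Finset.sum_Ico_consecutive _ hk1 hkN.le, Finset.sum_eq_sum_Ico_succ_bot hkN]
    have e1 : ∑ i ∈ Finset.Ico 1 k, (g f i (π i s) - d i) = d k - d 1 := by
      rw [← Finset.sum_Ico_sub d hk1]
      refine Finset.sum_congr rfl fun i hi => ?_
      rw [Finset.mem_Ico] at hi
      have : π i s = lN := by
        apply Set.projIcc_of_right_le
        have h0 := x_mono N x hx (i+1) k (by omega) (by omega) hkN.le
        have h1 := hapos i hi.1 (by omega)
        have h2 : x N - x 1 ≤ (s - x i) / a i := by
          rw [le_div_iff₀ h1, ha i, mul_div_cancel₀ _ hl.ne']; linarith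
        linarith
      rw [this, hgN i hi.1 (by omega)]
    have e2 : ∑ i ∈ Finset.Ico (k+1) N, (g f i (π i s) - d i) = 0 := by
      refine Finset.sum_eq_zero fun i hi => ?_
      rw [Finset.mem_Ico] at hi
      have : π i s = l1 := by
        apply Set.projIcc_of_le_left
        have h0 := x_mono N x hx (k+1) i (by omega) (by omega) (by omega)
        have h1 := hapos i (by omega) (by omega)
        have h2 : (s - x i) / a i ≤ 0 := div_nonpos_of_nonpos_of_nonneg (by linarith) h1.le
        linarith
      rw [this, hg1 i (by omega) (by omega), sub_self]
    rw [e1, e2]; ring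
  have hπ1 : ∀ i, 1 ≤ i → i < N → π i (x i) = l1 := fun i h1 h2 => by
    apply Set.projIcc_of_le_left; simp
  have hπ2 : ∀ i, 1 ≤ i → i < N → ∀ t (ht : t ∈ I), π i (x i + a i * (t - x 1)) = ⟨t, ht⟩ := fun i h1 h2 t ht => by
    have : x 1 + (x i + a i * (t - x 1) - x i) / a i = t := by
      have := (hapos i h1 h2).ne'
      field_simp; ring
    show Set.projIcc (x 1) (x N) hle _ = _
    rw [this]; exact Set.projIcc_of_mem hle ht
  have hend : ∀ i, x i + a i * (x N - x 1) = x (i+1) := fun i => by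
    rw [ha, div_mul_cancel₀ _ hl.ne']; ring
  have hmaps : Set.MapsTo T S S := by
    intro f hf
    constructor
    · rw [key f hf 1 le_rfl (by omega) l1 le_rfl (hx 1 le_rfl (by omega)).le]
      show g f 1 (π 1 (x 1)) = _
      rw [hπ1 1 le_rfl (by omega)]
      show c 1 * f l1 + p 1 (x 1) = _
      rw [hf.1, hp1 1 le_rfl (by omega)]
    · obtain ⟨m, rfl⟩ : ∃ m, N = m + 1 := ⟨N - 1, by omega⟩
      rw [key f hf m (by omega) (by omega) lN (hx m (by omega) (by omega)).le le_rfl]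
      show g f m (π m (x (m+1))) = _
      rw [← hend m, hπ2 m (by omega) (by omega) _ lN.2]
      show c m * f lN + p m (x (m+1)) = _
      rw [hf.2, hpN m (by omega) (by omega)]
  have hSc : IsClosed S := by
    apply IsClosed.inter
    · exact isClosed_eq (continuous_eval_const l1) continuous_const
    · exact isClosed_eq (continuous_eval_const lN) continuous_const
  have hcontr : ContractingWith ⟨κ, hκ0⟩ (hmaps.restrict T S S) := by
    refine ⟨by exact_mod_cast hκ1, LipschitzWith.of_dist_le_mul fun f f' => ?_⟩
    show dist (T f) (T f') ≤ κ * dist (f : C(I,ℝ)) f'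
    rw [ContinuousMap.dist_le (mul_nonneg hκ0 dist_nonneg)]
    intro s
    obtain ⟨k, hk1, hkN, h1, h2⟩ := piece_exists N x (N-1) (by omega) (by omega) s s.2.1
      (by rw [Nat.sub_add_cancel (by omega)]; exact s.2.2)
    rw [key f f.2 k hk1 hkN s h1 h2, key f' f'.2 k hk1 hkN s h1 h2, Real.dist_eq]
    have : g f k (π k s) - g f' k (π k s) = c k * ((f : C(I,ℝ)) (π k s) - (f' : C(I,ℝ)) (π k s)) := by
      simp only [g]; ring
    rw [this, abs_mul]
    refine mul_le_mul (hc k hk1 hkN) ?_ (abs_nonneg _) hκ0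
    rw [← Real.dist_eq]
    exact ContinuousMap.dist_apply_le_dist _
  let f0 : C(I, ℝ) := ⟨fun s => d 1 + (d N - d 1) * ((s - x 1) / (x N - x 1)), by fun_prop⟩
  have hf0 : f0 ∈ S := by
    constructor
    · show d 1 + (d N - d 1) * ((x 1 - x 1) / (x N - x 1)) = _
      simp
    · show d 1 + (d N - d 1) * ((x N - x 1) / (x N - x 1)) = _
      rw [div_self hl.ne']; ring
  obtain ⟨f, hfS, hfix, -⟩ := hcontr.exists_fixedPoint' hSc.isComplete hmaps hf0 (edist_ne_top _ _)
  have hval : ∀ t (ht : t ∈ I), Set.IccExtend hle f t = f ⟨t, ht⟩ := fun t ht =>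
    Set.IccExtend_of_mem hle f ht
  refine ⟨Set.IccExtend hle f, f.continuous.Icc_extend', ?_, ?_, ?_⟩
  · rw [hval _ l1.2]; exact hfS.1
  · rw [hval _ lN.2]; exact hfS.2
  · intro i h1 h2 t ht
    have hai := hapos i h1 h2
    have b1 : x i ≤ x i + a i * (t - x 1) := by
      have := mul_nonneg hai.le (sub_nonneg.2 ht.1); linarith
    have b2 : x i + a i * (t - x 1) ≤ x (i+1) := by
      have := mul_le_mul_of_nonneg_left (sub_le_sub_right ht.2 (x 1)) hai.le
      rw [← hend i]; linarith
    have hm : x i + a i * (t - x 1) ∈ I :=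
      ⟨(x_mono N x hx 1 i le_rfl h1 h2.le).trans b1, b2.trans (x_mono N x hx (i+1) N (by omega) (by omega) le_rfl)⟩
    rw [hval _ hm, hval _ ht]
    have := key f hfS i h1 h2 ⟨_, hm⟩ b1 b2
    rw [hfix] at this
    rw [this]
    show g f i (π i (x i + a i * (t - x 1))) = _
    rw [hπ2 i h1 h2 t ht]

lemma q_facts (u v U V W Z A l : ℝ) (hu : 0 < u) (hv : 0 ≤ v) (hl : 0 < l) (q : ℝ → ℝ)
    (hq : ∀ t, q t = (U * (1 - (t - A) / l) ^ 3 + V * ((t - A) / l) * (1 - (t - A) / l) ^ 2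
        + W * ((t - A) / l) ^ 2 * (1 - (t - A) / l) + Z * ((t - A) / l) ^ 3)
        / (u + v * ((t - A) / l) * (1 - (t - A) / l))) :
    (∀ t ∈ Set.Icc A (A + l), DifferentiableAt ℝ q t) ∧
    ContinuousOn (deriv q) (Set.Icc A (A + l)) ∧
    q A = U / u ∧ q (A + l) = Z / u ∧
    deriv q A = ((V - 3 * U) * u - U * v) / u ^ 2 / l ∧
    deriv q (A + l) = ((3 * Z - W) * u + Z * v) / u ^ 2 / l := by
  obtain rfl : q = _ := funext hq
  clear hq
  have hden : ∀ t ∈ Set.Icc A (A + l), u + v * ((t - A) / l) * (1 - (t - A) / l) ≠ 0 := by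
    intro t ht
    have h1 : 0 ≤ (t - A) / l := div_nonneg (by linarith [ht.1]) hl.le
    have h2 : (t - A) / l ≤ 1 := by rw [div_le_one hl]; linarith [ht.2]
    have := mul_nonneg (mul_nonneg hv h1) (sub_nonneg.2 h2)
    linarith
  have hopen : IsOpen {t : ℝ | u + v * ((t - A) / l) * (1 - (t - A) / l) ≠ 0} :=
    isOpen_ne_fun (by fun_prop) (by fun_prop)
  have hcd : ContDiffOn ℝ 1 (fun t : ℝ => (U * (1 - (t - A) / l) ^ 3 + V * ((t - A) / l) * (1 - (t - A) / l) ^ 2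
        + W * ((t - A) / l) ^ 2 * (1 - (t - A) / l) + Z * ((t - A) / l) ^ 3)
        / (u + v * ((t - A) / l) * (1 - (t - A) / l))) {t : ℝ | u + v * ((t - A) / l) * (1 - (t - A) / l) ≠ 0} := by
    refine ContDiffOn.div (ContDiff.contDiffOn ?_) (ContDiff.contDiffOn ?_) (fun t ht => ht)
    · fun_prop
    · fun_prop
  have hd : ∀ t : ℝ, HasDerivAt (fun t : ℝ => (t - A) / l) (1 / l) t := fun t =>
    ((hasDerivAt_id t).sub_const A).div_const l
  have hdq : ∀ t, u + v * ((t - A) / l) * (1 - (t - A) / l) ≠ 0 → _ := fun t ht =>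
    (((((((hd t).const_sub 1).pow 3).const_mul U).add
      (((hd t).const_mul V).mul (((hd t).const_sub 1).pow 2))).add
      ((((hd t).pow 2).const_mul W).mul ((hd t).const_sub 1))).add (((hd t).pow 3).const_mul Z)).div
      ((((hd t).const_mul v).mul ((hd t).const_sub 1)).const_add u) ht
  have hA : A ∈ Set.Icc A (A + l) := ⟨le_rfl, by linarith⟩
  have hB : A + l ∈ Set.Icc A (A + l) := ⟨by linarith, le_rfl⟩
  refine ⟨fun t ht => ?_, ?_, ?_, ?_, ?_, ?_⟩
  · exact (hcd.contDiffAt (hopen.mem_nhds (hden t ht))).differentiableAt (by norm_num)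
  · exact (hcd.continuousOn_deriv_of_isOpen hopen le_rfl).mono hden
  · simp
  · simp [hl.ne']
  · refine Eq.trans (hdq A (hden _ hA)).deriv ?_
    simp
    field_simp
    ring
  · refine Eq.trans (hdq (A + l) (hden _ hB)).deriv ?_
    simp [hl.ne']
    field_simp
    ring


/-- With `|αᵢ| ≤ κ aᵢ` (`0 ≤ κ < 1`), `uᵢ > 0`, `vᵢ ≥ 0`, the rational
cubic spline FIF `Ψ` is `C¹` on `I`, interpolates `Ψ(xᵢ) = yᵢ`, `Ψ'(xᵢ) = dᵢ`,
and its derivative satisfies `Ψ'(Lᵢ(x)) = (αᵢ Ψ'(x) + qᵢ'(x))/aᵢ`. -/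
theorem stmt_3
    (N : ℕ) (hN : 2 < N)
    (x y d : ℕ → ℝ)
    (hx : ∀ i, 1 ≤ i → i < N → x i < x (i + 1))
    (a : ℕ → ℝ) (ha : ∀ i, a i = (x (i + 1) - x i) / (x N - x 1))
    (L : ℕ → ℝ → ℝ)
    (hL : ∀ i, 1 ≤ i → i < N → ∀ t : ℝ, L i t =
      a i * t + (x N * x i - x 1 * x (i + 1)) / (x N - x 1))
    (α u v : ℕ → ℝ) (κ : ℝ)
    (hκ0 : 0 ≤ κ) (hκ1 : κ < 1)
    (hα : ∀ i, 1 ≤ i → i < N → |α i| ≤ κ * a i)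
    (hu : ∀ i, 1 ≤ i → i < N → 0 < u i)
    (hv : ∀ i, 1 ≤ i → i < N → 0 ≤ v i)
    (U V W Z : ℕ → ℝ)
    (hU : ∀ i, U i = u i * (y i - α i * y 1))
    (hV : ∀ i, V i = (3 * u i + v i) * (y i - α i * y 1)
      + u i * (x (i + 1) - x i) * d i - α i * u i * (x N - x 1) * d 1)
    (hW : ∀ i, W i = (3 * u i + v i) * (y (i + 1) - α i * y N)
      - u i * (x (i + 1) - x i) * d (i + 1) + α i * u i * (x N - x 1) * d N)
    (hZ : ∀ i, Z i = u i * (y (i + 1) - α i * y N))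
    (q : ℕ → ℝ → ℝ)
    (hq : ∀ (i : ℕ) (t θ : ℝ), θ = (t - x 1) / (x N - x 1) →
      q i t = (U i * (1 - θ) ^ 3 + V i * θ * (1 - θ) ^ 2
        + W i * θ ^ 2 * (1 - θ) + Z i * θ ^ 3) / (u i + v i * θ * (1 - θ)))
    (Ψ : ℝ → ℝ)
    (hΨc : ContinuousOn Ψ (Set.Icc (x 1) (x N)))
    (hΨ : ∀ i, 1 ≤ i → i < N → ∀ t ∈ Set.Icc (x 1) (x N),
      Ψ (L i t) = α i * Ψ t + q i t) :
    ContDiffOn ℝ 1 Ψ (Set.Icc (x 1) (x N)) ∧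
    (∀ i, 1 ≤ i → i ≤ N → Ψ (x i) = y i) ∧
    (∀ i, 1 ≤ i → i ≤ N →
      derivWithin Ψ (Set.Icc (x 1) (x N)) (x i) = d i) ∧
    (∀ i, 1 ≤ i → i < N → ∀ t ∈ Set.Icc (x 1) (x N),
      derivWithin Ψ (Set.Icc (x 1) (x N)) (L i t) =
        (α i * derivWithin Ψ (Set.Icc (x 1) (x N)) t + deriv (q i) t) / a i) := by
  have hlt : x 1 < x N := lt_of_lt_of_le (hx 1 le_rfl (by omega))
    (x_mono N x hx 2 N (by omega) (by omega) le_rfl)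
  have hle := hlt.le
  have hl : 0 < x N - x 1 := sub_pos.2 hlt
  have hapos : ∀ i, 1 ≤ i → i < N → 0 < a i := fun i h1 h2 => by
    rw [ha]; exact div_pos (sub_pos.2 (hx i h1 h2)) hl
  have hAl : x 1 + (x N - x 1) = x N := by ring
  have hqf := fun i (h1 : 1 ≤ i) (h2 : i < N) =>
    q_facts (u i) (v i) (U i) (V i) (W i) (Z i) (x 1) (x N - x 1) (hu i h1 h2) (hv i h1 h2) hl
      (q i) (fun t => hq i t _ rfl)
  rw [hAl] at hqf
  have hL' : ∀ i, 1 ≤ i → i < N → ∀ t, L i t = x i + a i * (t - x 1) := fun i h1 h2 t => by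
    rw [hL i h1 h2, ha]; field_simp; ring
  have hend : ∀ i, x i + a i * (x N - x 1) = x (i+1) := fun i => by
    rw [ha, div_mul_cancel₀ _ hl.ne']; ring
  have hstart : ∀ i, x i + a i * (x 1 - x 1) = x i := fun i => by ring
  have m1 : x 1 ∈ Set.Icc (x 1) (x N) := ⟨le_rfl, hle⟩
  have mN : x N ∈ Set.Icc (x 1) (x N) := ⟨hle, le_rfl⟩
  have hmI : ∀ i, 1 ≤ i → i ≤ N → x i ∈ Set.Icc (x 1) (x N) := fun i h1 h2 =>
    ⟨x_mono N x hx 1 i le_rfl h1 h2, x_mono N x hx i N h1 h2 le_rfl⟩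
  have hLmem : ∀ i, 1 ≤ i → i < N → ∀ t ∈ Set.Icc (x 1) (x N),
      L i t ∈ Set.Icc (x 1) (x N) := by
    intro i h1 h2 t ht
    have hai := hapos i h1 h2
    rw [hL' i h1 h2]
    have b1 : x i ≤ x i + a i * (t - x 1) := by
      have := mul_nonneg hai.le (sub_nonneg.2 ht.1); linarith
    have b2 : x i + a i * (t - x 1) ≤ x (i+1) := by
      have := mul_le_mul_of_nonneg_left (sub_le_sub_right ht.2 (x 1)) hai.le
      rw [← hend i]; linarith
    exact ⟨(hmI i h1 h2.le).1.trans b1, b2.trans (hmI (i+1) (by omega) (by omega)).2⟩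
  -- contraction constants
  have hale : ∀ i, 1 ≤ i → i < N → a i ≤ 1 := fun i h1 h2 => by
    rw [ha, div_le_one hl]
    linarith [(hmI i h1 h2.le).1, (hmI (i+1) (by omega) (by omega)).2]
  have hακ : ∀ i, 1 ≤ i → i < N → |α i| ≤ κ := fun i h1 h2 =>
    (hα i h1 h2).trans (mul_le_of_le_one_right hκ0 (hale i h1 h2))
  have hα1 : ∀ i, 1 ≤ i → i < N → 1 - α i ≠ 0 := fun i h1 h2 => by
    have := (le_abs_self _).trans (hακ i h1 h2); linarith
  -- node values
  have hq1 : ∀ i, 1 ≤ i → i < N → q i (x 1) = y i - α i * y 1 := fun i h1 h2 => by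
    rw [(hqf i h1 h2).2.2.1, hU, mul_div_cancel_left₀ _ (hu i h1 h2).ne']
  have hqN : ∀ i, 1 ≤ i → i < N → q i (x N) = y (i+1) - α i * y N := fun i h1 h2 => by
    rw [(hqf i h1 h2).2.2.2.1, hZ, mul_div_cancel_left₀ _ (hu i h1 h2).ne']
  have hy1 : Ψ (x 1) = y 1 := by
    have h := hΨ 1 le_rfl (by omega) (x 1) m1
    rw [hL' 1 le_rfl (by omega), hstart, hq1 1 le_rfl (by omega)] at h
    apply mul_left_cancel₀ (hα1 1 le_rfl (by omega)); linarith
  have hyN : Ψ (x N) = y N := by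
    have h := hΨ (N-1) (by omega) (by omega) (x N) mN
    rw [hL' (N-1) (by omega) (by omega), hend, hqN (N-1) (by omega) (by omega),
      Nat.sub_add_cancel (by omega)] at h
    apply mul_left_cancel₀ (hα1 (N-1) (by omega) (by omega)); linarith
  have hy : ∀ i, 1 ≤ i → i ≤ N → Ψ (x i) = y i := by
    intro i h1 h2
    rcases h2.eq_or_lt with rfl | h2
    · exact hyN
    · have h := hΨ i h1 h2 (x 1) m1
      rw [hL' i h1 h2, hstart, hq1 i h1 h2, hy1] at h
      linarith
  -- the derivative
  obtain ⟨f, hfc, hf1, hfN, hf⟩ := exists_fix N hN x d hx a (fun i => α i / a i) ha κ hκ0 hκ1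
    (fun i h1 h2 => by
      rw [abs_div, abs_of_pos (hapos i h1 h2), div_le_iff₀ (hapos i h1 h2)]; exact hα i h1 h2)
    (fun i t => deriv (q i) t / a i)
    (fun i h1 h2 => (hqf i h1 h2).2.1.div_const _)
    (fun i h1 h2 => by
      have h3 := hapos i h1 h2
      have h4 := hu i h1 h2
      have h5 := sub_pos.2 (hx i h1 h2)
      simp only [(hqf i h1 h2).2.2.2.2.1, hU, hV, ha]
      field_simp
      ring)
    (fun i h1 h2 => by
      have h3 := hapos i h1 h2
      have h4 := hu i h1 h2
      have h5 := sub_pos.2 (hx i h1 h2)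
      simp only [(hqf i h1 h2).2.2.2.2.2, hW, hZ, ha]
      field_simp
      ring)
  have hΦ : ∀ t, HasDerivAt (fun s => ∫ r in (x 1)..s, f r) (f t) t := fun t =>
    intervalIntegral.integral_hasDerivAt_right (hfc.intervalIntegrable _ _)
      (hfc.stronglyMeasurableAtFilter _ _) hfc.continuousAt
  obtain ⟨Φ, hΦ1, hΦd⟩ : ∃ Φ : ℝ → ℝ, Φ (x 1) = 0 ∧ ∀ t, HasDerivAt Φ (f t) t :=
    ⟨_, intervalIntegral.integral_same, hΦ⟩
  have hΦc : Continuous Φ := continuous_iff_continuousAt.2 fun t => (hΦd t).continuousAt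
  have hdiff : ∀ i, 1 ≤ i → i < N → ∀ t ∈ Set.Icc (x 1) (x N),
      Φ (L i t) - α i * Φ t - q i t = Φ (x i) - q i (x 1) := by
    intro i h1 h2
    have hD : ∀ t ∈ Set.Icc (x 1) (x N),
        HasDerivAt (fun t => Φ (x i + a i * (t - x 1)) - α i * Φ t - q i t) 0 t := by
      intro t ht
      have e1 : HasDerivAt (fun t => x i + a i * (t - x 1)) (a i * 1) t :=
        (((hasDerivAt_id t).sub_const (x 1)).const_mul (a i)).const_add (x i)
      have e2 := (((hΦd (x i + a i * (t - x 1))).comp t e1).sub ((hΦd t).const_mul (α i))).sub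
        ((hqf i h1 h2).1 t ht).hasDerivAt
      refine e2.congr_deriv ?_
      rw [hf i h1 h2 t ht]
      have := (hapos i h1 h2).ne'
      field_simp
      ring
    intro t ht
    have := constant_of_has_deriv_right_zero (f := fun t => Φ (x i + a i * (t - x 1)) - α i * Φ t - q i t)
      (a := x 1) (b := x N) (fun t ht => (hD t ht).continuousAt.continuousWithinAt)
      (fun t ht => (hD t ⟨ht.1, ht.2.le⟩).hasDerivWithinAt) t ht
    simp only [hstart, hΦ1] at this
    rw [hL' i h1 h2, this]; ring
  -- the error function
  obtain ⟨E, hE⟩ : ∃ E : ℝ → ℝ, ∀ t, E t = Ψ t - y 1 - Φ t := ⟨_, fun t => rfl⟩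
  have hE1 : E (x 1) = 0 := by rw [hE, hy1, hΦ1]; ring
  have hEL : ∀ i, 1 ≤ i → i < N → ∀ t ∈ Set.Icc (x 1) (x N),
      E (L i t) = E (x i) + α i * E t := by
    intro i h1 h2 t ht
    have e1 := hdiff i h1 h2 t ht
    rw [hE, hE, hE, hΨ i h1 h2 t ht, hy i h1 h2.le]
    rw [hq1 i h1 h2] at e1
    linear_combination -e1
  have hEstep : ∀ i, 1 ≤ i → i < N → E (x (i+1)) = E (x i) + α i * E (x N) := by
    intro i h1 h2
    have := hEL i h1 h2 _ mN
    rwa [hL' i h1 h2, hend] at this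
  have hEb : ∀ k, 1 ≤ k → k ≤ N → |E (x k)| ≤ κ * |E (x N)| * ((x k - x 1) / (x N - x 1)) := by
    intro k hk
    induction k, hk using Nat.le_induction with
    | base => intro _; simp [hE1]
    | succ k hk ih =>
      intro hkN
      have h := ih (by omega)
      rw [hEstep k hk (by omega)]
      have h2 : |α k * E (x N)| ≤ κ * a k * |E (x N)| := by
        rw [abs_mul]; exact mul_le_mul_of_nonneg_right (hα k hk (by omega)) (abs_nonneg _)
      rw [ha] at h2
      refine (abs_add_le _ _).trans ((add_le_add h h2).trans_eq ?_)
      ring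
  have hEN : |E (x N)| = 0 := by
    have := hEb N (by omega) le_rfl
    rw [div_self hl.ne'] at this
    nlinarith [abs_nonneg (E (x N))]
  have hEx : ∀ k, 1 ≤ k → k ≤ N → E (x k) = 0 := by
    intro k h1 h2
    have := hEb k h1 h2
    rw [hEN] at this
    exact abs_eq_zero.1 (le_antisymm (by simpa using this) (abs_nonneg _))
  have hEc : ContinuousOn E (Set.Icc (x 1) (x N)) := by
    rw [show E = fun t => Ψ t - y 1 - Φ t from funext hE]
    exact (hΨc.sub continuousOn_const).sub hΦc.continuousOn
  have hE0 : ∀ t ∈ Set.Icc (x 1) (x N), E t = 0 := by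
    obtain ⟨s, hs, hmax⟩ := isCompact_Icc.exists_isMaxOn ⟨_, m1⟩ hEc.abs
    have hs0 : |E s| ≤ 0 := by
      obtain ⟨k, hk1, hkN, h1, h2⟩ := piece_exists N x (N-1) (by omega) (by omega) s hs.1
        (by rw [Nat.sub_add_cancel (by omega)]; exact hs.2)
      have hak := hapos k hk1 hkN
      have ht : x 1 + (s - x k) / a k ∈ Set.Icc (x 1) (x N) := by
        constructor
        · have := div_nonneg (sub_nonneg.2 h1) hak.le; linarith
        · have : (s - x k) / a k ≤ x N - x 1 := by
            rw [div_le_iff₀ hak, mul_comm]; linarith [hend k]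
          linarith
      have hs' : L k (x 1 + (s - x k) / a k) = s := by
        rw [hL' k hk1 hkN]; have := hak.ne'; field_simp; ring
      have h3 := hEL k hk1 hkN _ ht
      rw [hs', hEx k hk1 hkN.le, zero_add] at h3
      have h4 : |E (x 1 + (s - x k) / a k)| ≤ |E s| := hmax ht
      have h5 : |E s| ≤ κ * |E s| := by
        conv_lhs => rw [h3, abs_mul]
        exact mul_le_mul (hακ k hk1 hkN) h4 (abs_nonneg _) hκ0
      nlinarith
    intro t ht
    have h4 : |E t| ≤ |E s| := hmax ht
    exact abs_eq_zero.1 (le_antisymm (h4.trans hs0) (abs_nonneg _))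
  have hΨΦ : ∀ t ∈ Set.Icc (x 1) (x N), Ψ t = Φ t + y 1 := fun t ht => by
    have := hE0 t ht; rw [hE] at this; linarith
  have hud := uniqueDiffOn_Icc hlt
  have hder : ∀ t ∈ Set.Icc (x 1) (x N), HasDerivWithinAt Ψ (f t) (Set.Icc (x 1) (x N)) t :=
    fun t ht => ((hΦd t).add_const (y 1)).hasDerivWithinAt.congr hΨΦ (hΨΦ t ht)
  have hdw : ∀ t ∈ Set.Icc (x 1) (x N), derivWithin Ψ (Set.Icc (x 1) (x N)) t = f t :=
    fun t ht => (hder t ht).derivWithin (hud t ht)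
  refine ⟨?_, hy, ?_, ?_⟩
  · rw [contDiffOn_one_iff_derivWithin hud]
    exact ⟨fun t ht => (hder t ht).differentiableWithinAt, hfc.continuousOn.congr hdw⟩
  · intro i h1 h2
    rw [hdw _ (hmI i h1 h2)]
    rcases h2.eq_or_lt with rfl | h2
    · exact hfN
    · have h := hf i h1 h2 (x 1) m1
      rw [hstart, hf1] at h
      rw [h]
      have h3 := hapos i h1 h2
      have h4 := hu i h1 h2
      have h5 := sub_pos.2 (hx i h1 h2)
      simp only [(hqf i h1 h2).2.2.2.2.1, hU, hV, ha]
      field_simp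
      ring
  · intro i h1 h2 t ht
    rw [hdw _ (hLmem i h1 h2 t ht), hdw t ht, hL' i h1 h2, hf i h1 h2 t ht]
    ring
end

section
/- Let Φ ∈ C^3(I) be an original function, set y_i = Φ(x_i) and d_i = Φ'(x_i), and let Ψ be the rational cubic spline fractal interpolation function and C the classical rational cubic interpolant for this data (with |α_i| ≤ κ a_i, 0 ≤ κ < 1, u_i > 0, v_i ≥ 0). Assume the classical error bound ‖Φ − C‖_∞ ≤ (1/2) ‖Φ^{(3)}‖_∞ max_{1 ≤ i ≤ N−1} {h_i^3 c_i} with constants c_i independent of h_i. Then ‖Φ − Ψ‖_∞ ≤ (1/2) ‖Φ^{(3)}‖_∞ h^3 c + (|α|_∞ / (s(1 − |α|_∞))) { |u|_∞ M + (1/4)[(3|u|_∞ + |v|_∞) M + |u|_∞ (h |d|_∞ + (x_N − x_1) max{|d_1|, |d_N|})] }, where c = max_i c_i, M = |y|_∞ + max{|y_1|, |y_N|}, s = min_i (u_i + v_i/4), |y|_∞ = max_i |y_i|, |d|_∞ = max_i |d_i|, |u|_∞ = max_i u_i, |v|_∞ = max_i v_i, |α|_∞ = max_i |α_i|, and h =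 max_i h_i. -/
lemma core_bound (u v θ p r d e h Y D : ℝ) (hu : 0 < u) (hv : 0 ≤ v) (h0 : 0 ≤ θ) (h1 : θ ≤ 1)
    (hp : |p| ≤ Y) (hr : |r| ≤ Y) (hd : |d| ≤ D) (he : |e| ≤ D) (hh : 0 ≤ h) :
    |(u * p * (1 - θ) ^ 3 + ((3 * u + v) * p + u * h * d) * θ * (1 - θ) ^ 2
      + ((3 * u + v) * r - u * h * e) * θ ^ 2 * (1 - θ) + u * r * θ ^ 3)
      / (u + v * θ * (1 - θ))| ≤ Y + h * D / 4 * (u / (u + v / 4)) := by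
  have h1' : 0 ≤ 1 - θ := by linarith
  have hw : 0 ≤ θ * (1 - θ) := mul_nonneg h0 h1'
  have hw4 : θ * (1 - θ) ≤ 1 / 4 := by nlinarith [sq_nonneg (θ - 1 / 2)]
  have hD : 0 ≤ D := (abs_nonneg _).trans hd
  have hden : 0 < u + v * θ * (1 - θ) := by
    have := mul_nonneg hv hw
    nlinarith
  have hden2 : 0 < u + v / 4 := by positivity
  have hP : 0 ≤ u * (1 - θ) ^ 3 + (3 * u + v) * θ * (1 - θ) ^ 2 := by positivity
  have hR : 0 ≤ u * θ ^ 3 + (3 * u + v) * θ ^ 2 * (1 - θ) := by positivity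
  set P := u * (1 - θ) ^ 3 + (3 * u + v) * θ * (1 - θ) ^ 2 with hPd
  set R := u * θ ^ 3 + (3 * u + v) * θ ^ 2 * (1 - θ) with hRd
  have hPR : P + R = u + v * θ * (1 - θ) := by rw [hPd, hRd]; ring
  have hnum : u * p * (1 - θ) ^ 3 + ((3 * u + v) * p + u * h * d) * θ * (1 - θ) ^ 2
      + ((3 * u + v) * r - u * h * e) * θ ^ 2 * (1 - θ) + u * r * θ ^ 3
      = P * p + R * r + u * h * (θ * (1 - θ)) * (d * (1 - θ) - e * θ) := by
    rw [hPd, hRd]; ring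
  rw [hnum, abs_div, abs_of_pos hden, div_le_iff₀ hden]
  have b1 : |P * p| ≤ P * Y := by
    rw [abs_mul, abs_of_nonneg hP]; exact mul_le_mul_of_nonneg_left hp hP
  have b2 : |R * r| ≤ R * Y := by
    rw [abs_mul, abs_of_nonneg hR]; exact mul_le_mul_of_nonneg_left hr hR
  have b3 : |d * (1 - θ) - e * θ| ≤ D := by
    rw [abs_le] at *
    constructor <;> nlinarith [hd.1, hd.2, he.1, he.2]
  have hc : 0 ≤ u * h * (θ * (1 - θ)) := by positivity
  have b4 : |u * h * (θ * (1 - θ)) * (d * (1 - θ) - e * θ)| ≤ u * h * (θ * (1 - θ)) * D := by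
    rw [abs_mul, abs_of_nonneg hc]; exact mul_le_mul_of_nonneg_left b3 hc
  have b5 : θ * (1 - θ) ≤ 1 / 4 * (1 / (u + v / 4)) * (u + v * θ * (1 - θ)) := by
    rw [show 1 / 4 * (1 / (u + v / 4)) * (u + v * θ * (1 - θ))
      = (1 / 4 * (u + v * θ * (1 - θ))) / (u + v / 4) by ring, le_div_iff₀ hden2]
    nlinarith
  have b6 : u * h * (θ * (1 - θ)) * D
      ≤ h * D / 4 * (u / (u + v / 4)) * (u + v * θ * (1 - θ)) := by
    have := mul_le_mul_of_nonneg_left b5 (show 0 ≤ u * h * D by positivity)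
    calc _ = u * h * D * (θ * (1 - θ)) := by ring
      _ ≤ _ := this
      _ = _ := by ring
  have t1 := abs_add_le (P * p + R * r) (u * h * (θ * (1 - θ)) * (d * (1 - θ) - e * θ))
  have t2 := abs_add_le (P * p) (R * r)
  have : P * Y + R * Y = Y * (u + v * θ * (1 - θ)) := by rw [← hPR]; ring
  rw [add_mul Y]
  linarith

lemma exists_piece (x : ℕ → ℝ) (t : ℝ) (h1 : x 1 ≤ t) :
    ∀ n, 2 ≤ n → t ≤ x n → ∃ i, 1 ≤ i ∧ i < n ∧ x i ≤ t ∧ t ≤ x (i + 1) := by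
  intro n hn
  induction n, hn using Nat.le_induction with
  | base => intro h; exact ⟨1, le_refl _, by norm_num, h1, h⟩
  | succ n hn ih =>
    intro h
    by_cases hc : t ≤ x n
    · obtain ⟨i, a, b, c, e⟩ := ih hc
      exact ⟨i, a, by omega, c, e⟩
    · exact ⟨n, by omega, by omega, by linarith, h⟩

/-- Error bound `‖Φ − Ψ‖_∞ ≤ (1/2)‖Φ⁽³⁾‖_∞ h³ c + fractal-perturbation term`
for the RCSFIF `Ψ` of a `C³` original function `Φ`, given the classical error bound
for the classical rational cubic interpolant `C`. -/
theorem stmt_14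
    (N : ℕ) (hN : 2 < N)
    (x y d : ℕ → ℝ)
    (hx : ∀ i, 1 ≤ i → i < N → x i < x (i + 1))
    (a : ℕ → ℝ) (ha : ∀ i, a i = (x (i + 1) - x i) / (x N - x 1))
    (L : ℕ → ℝ → ℝ)
    (hL : ∀ i, 1 ≤ i → i < N → ∀ t : ℝ, L i t =
      a i * t + (x N * x i - x 1 * x (i + 1)) / (x N - x 1))
    (Φ : ℝ → ℝ)
    (hΦ : ContDiffOn ℝ 3 Φ (Set.Icc (x 1) (x N)))
    (hy : ∀ i, 1 ≤ i → i ≤ N → y i = Φ (x i))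
    (hd : ∀ i, 1 ≤ i → i ≤ N → d i = derivWithin Φ (Set.Icc (x 1) (x N)) (x i))
    (α u v : ℕ → ℝ) (κ : ℝ)
    (hκ0 : 0 ≤ κ) (hκ1 : κ < 1)
    (hα : ∀ i, 1 ≤ i → i < N → |α i| ≤ κ * a i)
    (hu : ∀ i, 1 ≤ i → i < N → 0 < u i)
    (hv : ∀ i, 1 ≤ i → i < N → 0 ≤ v i)
    (U V W Z : ℕ → ℝ)
    (hU : ∀ i, U i = u i * (y i - α i * y 1))
    (hV : ∀ i, V i = (3 * u i + v i) * (y i - α i * y 1)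
      + u i * (x (i + 1) - x i) * d i - α i * u i * (x N - x 1) * d 1)
    (hW : ∀ i, W i = (3 * u i + v i) * (y (i + 1) - α i * y N)
      - u i * (x (i + 1) - x i) * d (i + 1) + α i * u i * (x N - x 1) * d N)
    (hZ : ∀ i, Z i = u i * (y (i + 1) - α i * y N))
    (q : ℕ → ℝ → ℝ)
    (hq : ∀ (i : ℕ) (t θ : ℝ), θ = (t - x 1) / (x N - x 1) →
      q i t = (U i * (1 - θ) ^ 3 + V i * θ * (1 - θ) ^ 2
        + W i * θ ^ 2 * (1 - θ) + Z i * θ ^ 3) / (u i + v i * θ * (1 - θ)))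
    (Ψ : ℝ → ℝ)
    (hΨc : ContinuousOn Ψ (Set.Icc (x 1) (x N)))
    (hΨ : ∀ i, 1 ≤ i → i < N → ∀ t ∈ Set.Icc (x 1) (x N),
      Ψ (L i t) = α i * Ψ t + q i t)
    (C : ℝ → ℝ)
    (hC : ∀ (i : ℕ), 1 ≤ i → i < N → ∀ t ∈ Set.Icc (x i) (x (i + 1)),
      ∀ υ : ℝ, υ = (t - x i) / (x (i + 1) - x i) →
      C t = (u i * y i * (1 - υ) ^ 3
        + ((3 * u i + v i) * y i + u i * (x (i + 1) - x i) * d i) * υ * (1 - υ) ^ 2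
        + ((3 * u i + v i) * y (i + 1)
            - u i * (x (i + 1) - x i) * d (i + 1)) * υ ^ 2 * (1 - υ)
        + u i * y (i + 1) * υ ^ 3) / (u i + v i * υ * (1 - υ)))
    -- the constants in the classical error bound
    (cc : ℕ → ℝ) (hcc : ∀ i, 1 ≤ i → i < N → 0 ≤ cc i)
    (Phi3 HC Cmax : ℝ)
    (hPhi3 : IsGreatest
      {z : ℝ | ∃ t ∈ Set.Icc (x 1) (x N),
        z = |iteratedDerivWithin 3 Φ (Set.Icc (x 1) (x N)) t|} Phi3)
    (hHC : IsGreatest {z : ℝ | ∃ i, 1 ≤ i ∧ i < N ∧ z = (x (i + 1) - x i) ^ 3 * cc i} HC)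
    (hCmax : IsGreatest {z : ℝ | ∃ i, 1 ≤ i ∧ i < N ∧ z = cc i} Cmax)
    (hclassical : ∀ t ∈ Set.Icc (x 1) (x N), |Φ t - C t| ≤ (1 / 2) * Phi3 * HC)
    (Ynorm Dnorm Unorm Vnorm Anorm H S M : ℝ)
    (hYn : IsGreatest {z : ℝ | ∃ i, 1 ≤ i ∧ i ≤ N ∧ z = |y i|} Ynorm)
    (hDn : IsGreatest {z : ℝ | ∃ i, 1 ≤ i ∧ i ≤ N ∧ z = |d i|} Dnorm)
    (hUn : IsGreatest {z : ℝ | ∃ i, 1 ≤ i ∧ i < N ∧ z = u i} Unorm)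
    (hVn : IsGreatest {z : ℝ | ∃ i, 1 ≤ i ∧ i < N ∧ z = v i} Vnorm)
    (hAn : IsGreatest {z : ℝ | ∃ i, 1 ≤ i ∧ i < N ∧ z = |α i|} Anorm)
    (hH : IsGreatest {z : ℝ | ∃ i, 1 ≤ i ∧ i < N ∧ z = x (i + 1) - x i} H)
    (hS : IsLeast {z : ℝ | ∃ i, 1 ≤ i ∧ i < N ∧ z = u i + v i / 4} S)
    (hM : M = Ynorm + max |y 1| |y N|) :
    ∀ t ∈ Set.Icc (x 1) (x N),
      |Φ t - Ψ t| ≤ (1 / 2) * Phi3 * H ^ 3 * Cmax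
        + (Anorm / (S * (1 - Anorm))) *
          (Unorm * M + (1 / 4) * ((3 * Unorm + Vnorm) * M
            + Unorm * (H * Dnorm + (x N - x 1) * max |d 1| |d N|))) := by
  have hmono : ∀ i j, 1 ≤ i → i ≤ j → j ≤ N → x i ≤ x j := by
    intro i j hi hij
    induction j, hij using Nat.le_induction with
    | base => intro _; exact le_refl _
    | succ j hj ih =>
      intro hjN
      exact (ih (by omega)).trans (hx j (by omega) (by omega)).le
  have hl : 0 < x N - x 1 := by
    have h1 := hx 1 (le_refl _) (by omega)
    have h2 := hmono (1 + 1) N (by omega) (by omega) (le_refl _)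
    linarith
  have hPhi0 : 0 ≤ Phi3 := by
    obtain ⟨t, _, h⟩ := hPhi3.1
    rw [h]; exact abs_nonneg _
  have hA0 : 0 ≤ Anorm := by
    obtain ⟨i, _, _, h⟩ := hAn.1
    rw [h]; exact abs_nonneg _
  have hA1 : Anorm < 1 := by
    obtain ⟨i, hi, hiN, h⟩ := hAn.1
    have hai : a i ≤ 1 := by
      rw [ha, div_le_one hl]
      have := hmono 1 i (le_refl _) hi hiN.le
      have := hmono (i + 1) N (by omega) (by omega) (le_refl _)
      linarith
    have := hα i hi hiN
    rw [h]
    nlinarith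
  have hS0 : 0 < S := by
    obtain ⟨i, hi, hiN, h⟩ := hS.1
    have := hu i hi hiN
    have := hv i hi hiN
    rw [h]; linarith
  have hU0 : 0 < Unorm := by
    obtain ⟨i, hi, hiN, h⟩ := hUn.1
    rw [h]; exact hu i hi hiN
  have hSU : S ≤ Unorm + 1 / 4 * (3 * Unorm + Vnorm) := by
    have h1 := hS.2 ⟨1, le_refl _, by omega, rfl⟩
    have h2 := hUn.2 ⟨1, le_refl _, by omega, rfl⟩
    have h3 := hVn.2 ⟨1, le_refl _, by omega, rfl⟩
    linarith
  have hY0 : 0 ≤ Ynorm := by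
    obtain ⟨i, _, _, h⟩ := hYn.1
    rw [h]; exact abs_nonneg _
  have hD0 : 0 ≤ Dnorm := by
    obtain ⟨i, _, _, h⟩ := hDn.1
    rw [h]; exact abs_nonneg _
  have hm0 : 0 ≤ max |d 1| |d N| := (abs_nonneg _).trans (le_max_left _ _)
  have hmy0 : 0 ≤ max |y 1| |y N| := (abs_nonneg _).trans (le_max_left _ _)
  have hHpos : 0 < H := by
    obtain ⟨i, hi, hiN, h⟩ := hH.1
    rw [h]; linarith [hx i hi hiN]
  have hHC' : HC ≤ H ^ 3 * Cmax := by
    obtain ⟨i, hi, hiN, h⟩ := hHC.1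
    have h1 : x (i + 1) - x i ≤ H := hH.2 ⟨i, hi, hiN, rfl⟩
    have h2 : cc i ≤ Cmax := hCmax.2 ⟨i, hi, hiN, rfl⟩
    have h3 : 0 ≤ x (i + 1) - x i := by linarith [hx i hi hiN]
    rw [h]
    exact mul_le_mul (pow_le_pow_left₀ h3 h1 3) h2 (hcc i hi hiN) (by positivity)
  have hus : ∀ i, 1 ≤ i → i < N → u i / (u i + v i / 4) ≤ Unorm / S := by
    intro i hi hiN
    exact div_le_div₀ hU0.le (hUn.2 ⟨i, hi, hiN, rfl⟩) hS0 (hS.2 ⟨i, hi, hiN, rfl⟩)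
  set KC := Ynorm + H * Dnorm / 4 * (Unorm / S) with hKC
  set KB := max |y 1| |y N| + (x N - x 1) * max |d 1| |d N| / 4 * (Unorm / S) with hKB
  -- pointwise decomposition
  have hpt : ∀ t ∈ Set.Icc (x 1) (x N), |C t| ≤ KC ∧ ∃ s ∈ Set.Icc (x 1) (x N), ∃ α' B : ℝ,
      |α'| ≤ Anorm ∧ |B| ≤ KB ∧ Ψ t - C t = α' * (Ψ s - B) := by
    intro t ht
    obtain ⟨i, hi, hiN, hti, hti'⟩ := exists_piece x t ht.1 N (by omega) ht.2
    have hhi : 0 < x (i + 1) - x i := by linarith [hx i hi hiN]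
    have hui := hu i hi hiN
    have hvi := hv i hi hiN
    obtain ⟨θ, hθ⟩ : ∃ θ, θ = (t - x i) / (x (i + 1) - x i) := ⟨_, rfl⟩
    have hθ0 : 0 ≤ θ := by rw [hθ]; exact div_nonneg (by linarith) hhi.le
    have hθ1 : θ ≤ 1 := by rw [hθ, div_le_one hhi]; linarith
    have hCt := hC i hi hiN t ⟨hti, hti'⟩ θ hθ
    have hus' := hus i hi hiN
    have hden : 0 < u i + v i * θ * (1 - θ) := by
      have : 0 ≤ 1 - θ := by linarith
      positivity
    refine ⟨?_, ?_⟩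
    · rw [hCt]
      refine (core_bound (u i) (v i) θ (y i) (y (i + 1)) (d i) (d (i + 1)) (x (i + 1) - x i)
        Ynorm Dnorm hui hvi hθ0 hθ1 (hYn.2 ⟨i, hi, hiN.le, rfl⟩)
        (hYn.2 ⟨i + 1, by omega, by omega, rfl⟩) (hDn.2 ⟨i, hi, hiN.le, rfl⟩)
        (hDn.2 ⟨i + 1, by omega, by omega, rfl⟩) hhi.le).trans ?_
      have h1 : x (i + 1) - x i ≤ H := hH.2 ⟨i, hi, hiN, rfl⟩
      rw [hKC]
      gcongr
    · have hs0 : θ = ((x 1 + θ * (x N - x 1)) - x 1) / (x N - x 1) := by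
        field_simp; ring
      have hsm : x 1 + θ * (x N - x 1) ∈ Set.Icc (x 1) (x N) := by
        constructor <;> nlinarith
      have hLs : L i (x 1 + θ * (x N - x 1)) = t := by
        rw [hL i hi hiN, ha, hθ]
        field_simp
        ring
      have h1 := hΨ i hi hiN _ hsm
      rw [hLs, hq i _ θ hs0, hU, hV, hW, hZ] at h1
      refine ⟨_, hsm, α i, _, hAn.2 ⟨i, hi, hiN, rfl⟩,
        (core_bound (u i) (v i) θ (y 1) (y N) (d 1) (d N) (x N - x 1)
        (max |y 1| |y N|) (max |d 1| |d N|) hui hvi hθ0 hθ1 (le_max_left _ _)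
        (le_max_right _ _) (le_max_left _ _) (le_max_right _ _) hl.le).trans ?_, ?_⟩
      · rw [hKB]
        gcongr
      · rw [h1, hCt]
        field_simp
        ring
  obtain ⟨KΨ, hKΨ⟩ := isCompact_Icc.exists_bound_of_continuousOn hΨc
  have hne : ((fun t => |Ψ t - C t|) '' Set.Icc (x 1) (x N)).Nonempty :=
    ⟨_, x 1, ⟨le_refl _, by linarith⟩, rfl⟩
  have hbdd : BddAbove ((fun t => |Ψ t - C t|) '' Set.Icc (x 1) (x N)) := by
    refine ⟨KΨ + KC, ?_⟩
    rintro _ ⟨t, ht, rfl⟩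
    have h1 := hKΨ t ht
    rw [Real.norm_eq_abs] at h1
    have := (hpt t ht).1
    have := abs_sub (Ψ t) (C t)
    simp only
    linarith
  obtain ⟨E, hE⟩ : ∃ E, E = sSup ((fun t => |Ψ t - C t|) '' Set.Icc (x 1) (x N)) := ⟨_, rfl⟩
  have hEt : ∀ t ∈ Set.Icc (x 1) (x N), |Ψ t - C t| ≤ E := by
    intro t ht
    rw [hE]; exact le_csSup hbdd ⟨t, ht, rfl⟩
  have hErec : E ≤ Anorm * (E + (KC + KB)) := by
    conv_lhs => rw [hE]
    apply csSup_le hne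
    rintro _ ⟨t, ht, rfl⟩
    obtain ⟨_, s, hs, α', B, hα', hB, heq⟩ := hpt t ht
    simp only
    rw [heq, abs_mul]
    have h1 := (hpt s hs).1
    have h2 := hEt s hs
    have h3 : |Ψ s - B| ≤ E + (KC + KB) := by
      rw [abs_le] at *
      constructor <;> linarith [h1.1, h1.2, h2.1, h2.2, hB.1, hB.2]
    exact mul_le_mul hα' h3 (abs_nonneg _) hA0
  have h1A : 0 < 1 - Anorm := by linarith
  have hEb : E ≤ Anorm / (1 - Anorm) * (KC + KB) := by
    rw [div_mul_eq_mul_div, le_div_iff₀ h1A]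
    linarith
  have hM0 : 0 ≤ M := by rw [hM]; linarith
  have hK : KC + KB ≤ (Unorm * M + (1 / 4) * ((3 * Unorm + Vnorm) * M
            + Unorm * (H * Dnorm + (x N - x 1) * max |d 1| |d N|))) / S := by
    rw [le_div_iff₀ hS0]
    have e1 : (KC + KB) * S
        = M * S + 1 / 4 * (Unorm * (H * Dnorm + (x N - x 1) * max |d 1| |d N|)) := by
      rw [hKC, hKB, hM]; field_simp; ring
    rw [e1]
    have := mul_le_mul_of_nonneg_left hSU hM0
    linarith
  intro t ht
  have f1 := hclassical t ht
  have f2 := hEt t ht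
  have f3 : (1 / 2) * Phi3 * HC ≤ (1 / 2) * Phi3 * H ^ 3 * Cmax := by
    have := mul_le_mul_of_nonneg_left hHC' (show 0 ≤ 1 / 2 * Phi3 by positivity)
    linarith
  have f4 := mul_le_mul_of_nonneg_left hK (show 0 ≤ Anorm / (1 - Anorm) by positivity)
  have f5 : ∀ X : ℝ, Anorm / (1 - Anorm) * (X / S) = Anorm / (S * (1 - Anorm)) * X := by
    intro X; field_simp
  rw [f5] at f4
  have f6 : |Φ t - Ψ t| ≤ |Φ t - C t| + |Ψ t - C t| := by
    have := abs_sub_le (Φ t) (C t) (Ψ t)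
    rwa [abs_sub_comm (C t)] at this
  linarith
end

section
/- Fix the data {(x_i, y_i, d_i)}, the scaling factors α_i with |α_i| ≤ κ a_i (0 ≤ κ < 1) and the parameters u_i > 0, and for v = (v_1, ..., v_{N−1}) with v_i > 0 let Ψ_v denote the corresponding rational cubic spline fractal interpolation function. Then as min_i v_i → ∞, Ψ_v converges uniformly on I to the affine fractal interpolation function Ψ_∞, the unique continuous function satisfying Ψ_∞(L_i(x)) = α_i Ψ_∞(x) + (y_i − α_i y_1)(1 − θ) + (y_{i+1} − α_i y_N) θ for all x ∈ I and i = 1,...,N−1, where θ = (x − x_1)/(x_N − x_1). -/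
theorem aux_bound (A B D1 D2 u v θ : ℝ) (hu : 0 < u) (hv : 0 < v) (h0 : 0 ≤ θ) (h1 : θ ≤ 1) :
    |(u * A * (1 - θ) ^ 3 + ((3 * u + v) * A + D1 * u) * θ * (1 - θ) ^ 2
      + ((3 * u + v) * B - D2 * u) * θ ^ 2 * (1 - θ) + u * B * θ ^ 3) / (u + v * θ * (1 - θ))
      - (A * (1 - θ) + B * θ)| ≤ u * (|B - A| + |D1| + |D2|) / v := by
  have hs : 0 ≤ θ * (1 - θ) := mul_nonneg h0 (by linarith)
  have hQ : 0 < u + v * θ * (1 - θ) := by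
    have := mul_nonneg hv.le hs
    nlinarith
  have e : (u * A * (1 - θ) ^ 3 + ((3 * u + v) * A + D1 * u) * θ * (1 - θ) ^ 2
      + ((3 * u + v) * B - D2 * u) * θ ^ 2 * (1 - θ) + u * B * θ ^ 3) / (u + v * θ * (1 - θ))
      - (A * (1 - θ) + B * θ)
      = u * (θ * (1 - θ)) * ((2 * θ - 1) * (B - A) + (1 - θ) * D1 - θ * D2)
        / (u + v * θ * (1 - θ)) := by
    rw [div_sub' hQ.ne']
    congr 1
    ring
  have hC : |(2 * θ - 1) * (B - A) + (1 - θ) * D1 - θ * D2| ≤ |B - A| + |D1| + |D2| := by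
    have e1 : |(2 * θ - 1) * (B - A)| ≤ |B - A| := by
      rw [abs_mul]
      exact mul_le_of_le_one_left (abs_nonneg _) (abs_le.2 ⟨by linarith, by linarith⟩)
    have e2 : |(1 - θ) * D1| ≤ |D1| := by
      rw [abs_mul]
      exact mul_le_of_le_one_left (abs_nonneg _) (abs_le.2 ⟨by linarith, by linarith⟩)
    have e3 : |θ * D2| ≤ |D2| := by
      rw [abs_mul]
      exact mul_le_of_le_one_left (abs_nonneg _) (abs_le.2 ⟨by linarith, by linarith⟩)
    have := abs_sub ((2 * θ - 1) * (B - A) + (1 - θ) * D1) (θ * D2)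
    have := abs_add_le ((2 * θ - 1) * (B - A)) ((1 - θ) * D1)
    linarith
  rw [e, abs_div, abs_of_pos hQ, abs_mul, abs_of_nonneg (mul_nonneg hu.le hs),
    div_le_div_iff₀ hQ hv]
  set K := |B - A| + |D1| + |D2| with hK
  have hK0 : 0 ≤ K := by positivity
  calc u * (θ * (1 - θ)) * |(2 * θ - 1) * (B - A) + (1 - θ) * D1 - θ * D2| * v
      ≤ u * (θ * (1 - θ)) * K * v := by gcongr
    _ ≤ u * K * (u + v * θ * (1 - θ)) := by
      have := mul_nonneg (mul_nonneg hu.le hK0) hu.le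
      nlinarith

theorem aux_find (x : ℕ → ℝ) (t : ℝ) (h : x 1 ≤ t) (n : ℕ) (hn : 2 ≤ n) (ht : t ≤ x n) :
    ∃ i, 1 ≤ i ∧ i < n ∧ x i ≤ t ∧ t ≤ x (i + 1) := by
  induction n, hn using Nat.le_induction with
  | base => exact ⟨1, le_refl _, by norm_num, h, ht⟩
  | succ n hn ih =>
    by_cases h' : t ≤ x n
    · obtain ⟨i, h1, h2, h3⟩ := ih h'
      exact ⟨i, h1, by omega, h3⟩
    · exact ⟨n, by omega, by omega, (not_le.1 h').le, ht⟩

theorem aux_mono (x : ℕ → ℝ) (N : ℕ) (hx : ∀ i, 1 ≤ i → i < N → x i < x (i + 1))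
    (i j : ℕ) (hi : 1 ≤ i) (hij : i ≤ j) (hj : j ≤ N) : x i ≤ x j := by
  induction j, hij using Nat.le_induction with
  | base => exact le_refl _
  | succ n hn ih => exact (ih (by omega)).trans (hx n (by omega) (by omega)).le


/-- Interval tension property: as `min vᵢ → ∞`, the RCSFIFs `Ψ_v`
converge uniformly on `I` to the affine FIF `Ψ∞` satisfying
`Ψ∞(Lᵢ(x)) = αᵢ Ψ∞(x) + (yᵢ − αᵢ y₁)(1−θ) + (y_{i+1} − αᵢ y_N)θ`. -/
theorem stmt_15
    (N : ℕ) (hN : 2 < N)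
    (x y d : ℕ → ℝ)
    (hx : ∀ i, 1 ≤ i → i < N → x i < x (i + 1))
    (a : ℕ → ℝ) (ha : ∀ i, a i = (x (i + 1) - x i) / (x N - x 1))
    (L : ℕ → ℝ → ℝ)
    (hL : ∀ i, 1 ≤ i → i < N → ∀ t : ℝ, L i t =
      a i * t + (x N * x i - x 1 * x (i + 1)) / (x N - x 1))
    (α u : ℕ → ℝ) (κ : ℝ)
    (hκ0 : 0 ≤ κ) (hκ1 : κ < 1)
    (hα : ∀ i, 1 ≤ i → i < N → |α i| ≤ κ * a i)
    (hu : ∀ i, 1 ≤ i → i < N → 0 < u i)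
    (Ψfam : (ℕ → ℝ) → ℝ → ℝ)
    (hfam : ∀ v : ℕ → ℝ, (∀ i, 1 ≤ i → i < N → 0 < v i) →
      ContinuousOn (Ψfam v) (Set.Icc (x 1) (x N)) ∧
      ∀ i, 1 ≤ i → i < N → ∀ t ∈ Set.Icc (x 1) (x N),
        ∀ θ : ℝ, θ = (t - x 1) / (x N - x 1) →
        Ψfam v (L i t) = α i * Ψfam v t +
          (u i * (y i - α i * y 1) * (1 - θ) ^ 3
            + ((3 * u i + v i) * (y i - α i * y 1)
                + u i * (x (i + 1) - x i) * d i
                - α i * u i * (x N - x 1) * d 1) * θ * (1 - θ) ^ 2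
            + ((3 * u i + v i) * (y (i + 1) - α i * y N)
                - u i * (x (i + 1) - x i) * d (i + 1)
                + α i * u i * (x N - x 1) * d N) * θ ^ 2 * (1 - θ)
            + u i * (y (i + 1) - α i * y N) * θ ^ 3)
          / (u i + v i * θ * (1 - θ)))
    (Ψinf : ℝ → ℝ)
    (hinfc : ContinuousOn Ψinf (Set.Icc (x 1) (x N)))
    (hinf : ∀ i, 1 ≤ i → i < N → ∀ t ∈ Set.Icc (x 1) (x N),
      ∀ θ : ℝ, θ = (t - x 1) / (x N - x 1) →
      Ψinf (L i t) = α i * Ψinf t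
        + (y i - α i * y 1) * (1 - θ) + (y (i + 1) - α i * y N) * θ) :
    ∀ ε > (0 : ℝ), ∃ M : ℝ, ∀ v : ℕ → ℝ,
      (∀ i, 1 ≤ i → i < N → 0 < v i) →
      (∀ i, 1 ≤ i → i < N → M ≤ v i) →
      ∀ t ∈ Set.Icc (x 1) (x N), |Ψfam v t - Ψinf t| ≤ ε := by
  intro ε hε
  have hmono := aux_mono x N hx
  have hlN : x 1 < x N := (hx 1 le_rfl (by omega)).trans_le (hmono 2 N (by omega) (by omega) le_rfl)
  have hl : 0 < x N - x 1 := sub_pos.2 hlN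
  set K : ℕ → ℝ := fun i => u i * (|(y (i + 1) - α i * y N) - (y i - α i * y 1)|
    + |(x (i + 1) - x i) * d i - α i * (x N - x 1) * d 1|
    + |(x (i + 1) - x i) * d (i + 1) - α i * (x N - x 1) * d N|) with hKdef
  have hK0 : ∀ i, 1 ≤ i → i < N → 0 ≤ K i := fun i h1 h2 =>
    mul_nonneg (hu i h1 h2).le (by positivity)
  set T := ∑ i ∈ Finset.Ico 1 N, K i with hT
  have hKT : ∀ i, 1 ≤ i → i < N → K i ≤ T := fun i h1 h2 =>
    Finset.single_le_sum (f := K) (fun j hj => hK0 j (Finset.mem_Ico.1 hj).1 (Finset.mem_Ico.1 hj).2)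
      (Finset.mem_Ico.2 ⟨h1, h2⟩)
  have hκ : 0 < 1 - κ := by linarith
  refine ⟨T / (ε * (1 - κ)), fun v hv hM => ?_⟩
  obtain ⟨hc, hf⟩ := hfam v hv
  have hcont : ContinuousOn (fun t => |Ψfam v t - Ψinf t|) (Set.Icc (x 1) (x N)) :=
    (hc.sub hinfc).abs
  obtain ⟨s, hs, hmax⟩ := isCompact_Icc.exists_isMaxOn ⟨x 1, Set.left_mem_Icc.2 hlN.le⟩ hcont
  have hmax' : ∀ t ∈ Set.Icc (x 1) (x N), |Ψfam v t - Ψinf t| ≤ |Ψfam v s - Ψinf s| :=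
    fun t ht => hmax ht
  suffices hS : |Ψfam v s - Ψinf s| ≤ ε from fun t ht => (hmax' t ht).trans hS
  obtain ⟨i, h1, h2, h3, h4⟩ := aux_find x s hs.1 N (by omega) hs.2
  have hh : 0 < x (i + 1) - x i := sub_pos.2 (hx i h1 h2)
  have hθ0 : 0 ≤ (s - x i) / (x (i + 1) - x i) := div_nonneg (by linarith) hh.le
  have hθ1 : (s - x i) / (x (i + 1) - x i) ≤ 1 := (div_le_one hh).2 (by linarith)
  obtain ⟨θ, hθ⟩ : ∃ θ, θ = (s - x i) / (x (i + 1) - x i) := ⟨_, rfl⟩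
  rw [← hθ] at hθ0 hθ1
  have hsθ : s = x i + θ * (x (i + 1) - x i) := by rw [hθ]; field_simp; ring
  obtain ⟨t, ht⟩ : ∃ t, t = x 1 + θ * (x N - x 1) := ⟨_, rfl⟩
  have htm : t ∈ Set.Icc (x 1) (x N) := ⟨by nlinarith, by nlinarith⟩
  have hθt : θ = (t - x 1) / (x N - x 1) := by rw [ht]; field_simp; ring
  have hLt : L i t = s := by
    rw [hL i h1 h2, ha, hsθ, ht]; field_simp; ring
  have e1 := hf i h1 h2 t htm θ hθt
  have e2 := hinf i h1 h2 t htm θ hθt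
  rw [hLt] at e1 e2
  have hb := aux_bound (y i - α i * y 1) (y (i + 1) - α i * y N)
    ((x (i + 1) - x i) * d i - α i * (x N - x 1) * d 1)
    ((x (i + 1) - x i) * d (i + 1) - α i * (x N - x 1) * d N) (u i) (v i) θ
    (hu i h1 h2) (hv i h1 h2) hθ0 hθ1
  have hb2 : K i / v i ≤ ε * (1 - κ) := by
    rw [div_le_iff₀ (hv i h1 h2)]
    have := (div_le_iff₀ (mul_pos hε hκ)).1 (hM i h1 h2)
    have := hKT i h1 h2
    linarith
  have hb' := hb.trans hb2
  have ha1 : a i ≤ 1 := by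
    rw [ha, div_le_one hl]
    have := hmono 1 i le_rfl h1 h2.le
    have := hmono (i + 1) N (by omega) (by omega) le_rfl
    linarith
  have hακ : |α i| ≤ κ := (hα i h1 h2).trans (mul_le_of_le_one_right hκ0 ha1)
  have hmul : |α i * (Ψfam v t - Ψinf t)| ≤ κ * |Ψfam v s - Ψinf s| := by
    rw [abs_mul]
    exact mul_le_mul hακ (hmax' t htm) (abs_nonneg _) hκ0
  have key : |Ψfam v s - Ψinf s| ≤ κ * |Ψfam v s - Ψinf s| + ε * (1 - κ) := by
    refine le_trans (le_of_eq ?_) ((abs_add_le _ _).trans (add_le_add hmul hb'))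
    congr 1
    rw [e1, e2]
    ring
  nlinarith
end
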